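/- For every k ≥ 2 and pairwise distinct channels a_1, …, a_k, define the open terms C_k = ½τ.a_k.0 ⊕ ½τ.X and C_j = ½τ.a_j.0 ⊕ ½τ.C_{j+1} for 1 ≤ j < k, let R = μX.C_1, and let the ring nodes be N_j = C_j{R/X} for 1 ≤ j ≤ k. Then for all i ≠ j in {1, …, k}, no branching bisimulation on P_RCCS relates N_i and N_j. -/

import Mathlib

/-!
Formalization of RCCS (Randomized CCS) following the paper
"A Uniform Framework for Probabilistic Process Models".
Channels form a type `Chan`; terms use de Bruijn indices for process variables.
-/

noncomputable section
open scoped Classical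

/-- RCCS terms over a set of channels, with de Bruijn process variables.
`sum n α T` is the nondeterministic choice `Σ_{i∈[n]} α_i.T_i` (guards are
names `Sum.inl a` or conames `Sum.inr a`); `rand n p T` is the random choice
`⊕_{i∈[n]} p_i τ.T_i`; `par` is composition, `loc a T` is localization `(a)T`,
and `fix T` is the fixpoint `μX.T`. -/
inductive Tm (Chan : Type) : Type
  | var : ℕ → Tm Chan
  | sum : (n : ℕ) → (Fin n → Chan ⊕ Chan) → (Fin n → Tm Chan) → Tm Chan
  | rand : (n : ℕ) → (Fin n → ℝ) → (Fin n → Tm Chan) → Tm Chan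
  | par : Tm Chan → Tm Chan → Tm Chan
  | loc : Chan → Tm Chan → Tm Chan
  | fix : Tm Chan → Tm Chan

variable {Chan : Type}

/-- Labels: names, conames, and `tau p` for `p ∈ (0,1]`; `tau 1` is the plain
silent action `τ`, identified with `1τ`. -/
inductive Lab (Chan : Type) : Type
  | name : Chan → Lab Chan
  | coname : Chan → Lab Chan
  | tau : ℝ → Lab Chan

/-- The label of an external prefix. -/
def guardLab : Chan ⊕ Chan → Lab Chan
  | .inl a => .name a
  | .inr a => .coname a

/-- A label is an action in `Act` if it is a name, a coname, or `τ = 1τ`. -/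
def Lab.IsAct : Lab Chan → Prop
  | .name _ => True
  | .coname _ => True
  | .tau p => p = 1

/-- Shift de Bruijn indices `≥ c` up by one. -/
def Tm.lift : ℕ → Tm Chan → Tm Chan
  | c, .var n => .var (if n < c then n else n + 1)
  | c, .sum n α T => .sum n α fun i => Tm.lift c (T i)
  | c, .rand n p T => .rand n p fun i => Tm.lift c (T i)
  | c, .par S T => .par (Tm.lift c S) (Tm.lift c T)
  | c, .loc a T => .loc a (Tm.lift c T)
  | c, .fix T => .fix (Tm.lift (c + 1) T)

/-- Capture-avoiding substitution of the term `S` for variable `c`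
(other variables above `c` are shifted down). -/
def Tm.inst : ℕ → Tm Chan → Tm Chan → Tm Chan
  | c, S, .var n => if n < c then .var n else if n = c then S else .var (n - 1)
  | c, S, .sum n α T => .sum n α fun i => Tm.inst c S (T i)
  | c, S, .rand n p T => .rand n p fun i => Tm.inst c S (T i)
  | c, S, .par S' T => .par (Tm.inst c S S') (Tm.inst c S T)
  | c, S, .loc a T => .loc a (Tm.inst c S T)
  | c, S, .fix T => .fix (Tm.inst (c + 1) (Tm.lift 0 S) T)

/-- All free variables are `< k`. -/
def Tm.ClosedAt : ℕ → Tm Chan → Prop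
  | k, .var n => n < k
  | k, .sum _ _ T => ∀ i, Tm.ClosedAt k (T i)
  | k, .rand _ _ T => ∀ i, Tm.ClosedAt k (T i)
  | k, .par S T => Tm.ClosedAt k S ∧ Tm.ClosedAt k T
  | k, .loc _ T => Tm.ClosedAt k T
  | k, .fix T => Tm.ClosedAt (k + 1) T

/-- Variable `v` is guarded: every free occurrence of `v` is under a prefix. -/
def Tm.Guarded : ℕ → Tm Chan → Prop
  | v, .var n => n ≠ v
  | _, .sum _ _ _ => True
  | _, .rand _ _ _ => True
  | v, .par S T => Tm.Guarded v S ∧ Tm.Guarded v T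
  | v, .loc _ T => Tm.Guarded v T
  | v, .fix T => Tm.Guarded (v + 1) T

/-- Well-formedness: in every random choice `⊕_{i∈I} p_i τ.T_i` we have `|I| ≥ 2`,
`p_i ∈ (0,1)` and `Σ_i p_i = 1`; in every fixpoint `μX.T` the variable `X` is
guarded in `T`. -/
def Tm.WF : Tm Chan → Prop
  | .var _ => True
  | .sum _ _ T => ∀ i, Tm.WF (T i)
  | .rand n p T => 2 ≤ n ∧ (∀ i, 0 < p i ∧ p i < 1) ∧ (∑ i, p i) = 1 ∧ ∀ i, Tm.WF (T i)
  | .par S T => Tm.WF S ∧ Tm.WF T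
  | .loc _ T => Tm.WF T
  | .fix T => Tm.Guarded 0 T ∧ Tm.WF T

/-- A term with no random choice, i.e. a CCS term. -/
def Tm.NoRand : Tm Chan → Prop
  | .var _ => True
  | .sum _ _ T => ∀ i, Tm.NoRand (T i)
  | .rand _ _ _ => False
  | .par S T => Tm.NoRand S ∧ Tm.NoRand T
  | .loc _ T => Tm.NoRand T
  | .fix T => Tm.NoRand T

/-- The transition relation of RCCS. -/
inductive Step : Tm Chan → Lab Chan → Tm Chan → Prop
  | sum {n α T} (i : Fin n) : Step (.sum n α T) (guardLab (α i)) (T i)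
  | rand {n p T} (i : Fin n) : Step (.rand n p T) (.tau (p i)) (T i)
  | comL {S S' T T' a} : Step S (.name a) S' → Step T (.coname a) T' →
      Step (.par S T) (.tau 1) (.par S' T')
  | comR {S S' T T' a} : Step S (.coname a) S' → Step T (.name a) T' →
      Step (.par S T) (.tau 1) (.par S' T')
  | parL {S S' T l} : Step S l S' → Step (.par S T) l (.par S' T)
  | parR {S T T' l} : Step T l T' → Step (.par S T) l (.par S T')
  | loc {T T' l} (a : Chan) : Step T l T' → l ≠ .name a → l ≠ .coname a →
      Step (.loc a T) l (.loc a T')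
  | fix {T T' l} : Step (Tm.inst 0 (.fix T) T) l T' → Step (.fix T) l T'

/-- Collective silent transitions `B →^{∐_{i∈[n]} p_i τ} ∐_{i∈[n]} B_i`,
arising from a single random choice and closed under composition,
localization and recursion. -/
inductive CStep : Tm Chan → (n : ℕ) → (Fin n → ℝ) → (Fin n → Tm Chan) → Prop
  | rand {n p T} : CStep (.rand n p T) n p T
  | parL {S T n p S'} : CStep S n p S' → CStep (.par S T) n p fun i => .par (S' i) T
  | parR {S T n p T'} : CStep T n p T' → CStep (.par S T) n p fun i => .par S (T' i)
  | loc {T n p T'} (a : Chan) : CStep T n p T' → CStep (.loc a T) n p fun i => .loc a (T' i)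
  | fix {T n p T'} : CStep (Tm.inst 0 (.fix T) T) n p T' → CStep (.fix T) n p T'

/-- The set `P_RCCS` of RCCS processes: closed well-formed terms. -/
def Proc (Chan : Type) : Type := {T : Tm Chan // T.ClosedAt 0 ∧ T.WF}

/-- A (potential) silent tree: nodes are addressed by reversed lists of child
indices (the root is `[]`, the `i`-th child of `σ` is `i :: σ`); each node
carries a process label and the probability labelling its incoming edge
(the root carries `1`). -/
structure PTree (Chan : Type) where
  node : List ℕ → Option (Proc Chan × ℝ)

namespace PTree

variable (t : PTree Chan)

/-- The address `σ` is a node of the tree. -/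
def hasNode (σ : List ℕ) : Prop := (t.node σ).isSome

/-- The probability labelling the incoming edge of the node at `σ`. -/
def edgeProb (σ : List ℕ) : ℝ := ((t.node σ).map Prod.snd).getD 0

/-- The probability of the path from the root to `σ`: the product of the edge
labels along it (`1` for the empty path). -/
def pathProb (t : PTree Chan) : List ℕ → ℝ
  | [] => 1
  | i :: σ => t.edgeProb (i :: σ) * pathProb t σ

/-- `σ` is a leaf. -/
def IsLeaf (σ : List ℕ) : Prop := t.hasNode σ ∧ ¬ t.hasNode (0 :: σ)

/-- `P(t↾_k)`: the sum of the probabilities of the branches of the truncation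
of `t` at depth `k` (a branch of `t↾_k` ends either at depth `k` or at a leaf
of `t` of depth `< k`). -/
def truncProb (k : ℕ) : ℝ :=
  ∑' σ : List ℕ,
    if t.hasNode σ ∧ (σ.length = k ∨ (σ.length < k ∧ ¬ t.hasNode (0 :: σ)))
    then t.pathProb σ else 0

/-- `P^k(t)`: the sum of the probabilities of the finite branches of `t` of
length at most `k`. -/
def finBranchProb (k : ℕ) : ℝ :=
  ∑' σ : List ℕ, if t.IsLeaf σ ∧ σ.length ≤ k then t.pathProb σ else 0

/-- `t` is regular: `P^f(t) = lim_k P^k(t) = 1`. -/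
def Regular : Prop := Filter.Tendsto t.finBranchProb Filter.atTop (nhds 1)

/-- `t` is divergent: `P^f(t) = lim_k P^k(t) = 0`. -/
def Divergent : Prop := Filter.Tendsto t.finBranchProb Filter.atTop (nhds 0)

end PTree

/-- `t` is a silent tree of `A`: the root is labeled `A`, the node set is
prefix-closed with children indexed by an initial segment of `ℕ`, the tree is
finitely branching, and every edge labeled `p` from `B` to `B'` satisfies
`p ∈ (0,1]` and `B →^{pτ} B'`. -/
def IsSilentTree (A : Proc Chan) (t : PTree Chan) : Prop :=
  t.node [] = some (A, 1) ∧
  (∀ i σ, t.hasNode (i :: σ) → t.hasNode σ) ∧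
  (∀ i j σ, j ≤ i → t.hasNode (i :: σ) → t.hasNode (j :: σ)) ∧
  (∀ σ, ∃ n, ∀ i, n ≤ i → ¬ t.hasNode (i :: σ)) ∧
  (∀ σ i B p B' p', t.node σ = some (B, p) → t.node (i :: σ) = some (B', p') →
    0 < p' ∧ p' ≤ 1 ∧ Step B.val (.tau p') B'.val)

/-- An ε-tree of `A` with regard to `E`: an `E`-tree of `A` (all node labels lie
in `[A]_E`) such that (1) any edge labeled `q < 1` out of a node `B` comes from a
collective random transition whose targets are exactly the children of `B`, and
(2) an edge labeled `1` out of `B` is a transition `B →^τ B'` to the unique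
child `B'` of `B`. -/
def IsETree (E : Proc Chan → Proc Chan → Prop) (A : Proc Chan) (t : PTree Chan) : Prop :=
  IsSilentTree A t ∧
  (∀ σ B p, t.node σ = some (B, p) → E A B) ∧
  (∀ σ i B p B' q, t.node σ = some (B, p) → t.node (i :: σ) = some (B', q) → q < 1 →
    ∃ n ps Ts, CStep B.val n ps Ts ∧
      (∀ j : ℕ, t.hasNode (j :: σ) ↔ j < n) ∧
      (∀ j : Fin n, ∃ C : Proc Chan, C.val = Ts j ∧ t.node ((j : ℕ) :: σ) = some (C, ps j))) ∧
  (∀ σ i B p B', t.node σ = some (B, p) → t.node (i :: σ) = some (B', 1) →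
    Step B.val (.tau 1) B'.val ∧ i = 0 ∧ ¬ t.hasNode (1 :: σ))

/-- The `E`-class of `A`. -/
def classOf (E : Proc Chan → Proc Chan → Prop) (A : Proc Chan) : Set (Proc Chan) := {B | E A B}

/-- `C` is an equivalence class of `E`. -/
def IsClass (E : Proc Chan → Proc Chan → Prop) (C : Set (Proc Chan)) : Prop :=
  ∃ A, C = classOf E A

/-- An equivalence `E` on `P_RCCS` is codivergent if for every `E`-class either
all members have a divergent ε-tree with regard to `E` or none does. -/
def Codivergent (E : Proc Chan → Proc Chan → Prop) : Prop :=
  ∀ A B, E A B →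
    ((∃ t, IsETree E A t ∧ t.Divergent) ↔ (∃ t, IsETree E B t ∧ t.Divergent))

/-- An ℓ-transition `A ⇝_E →^ℓ C`: a regular ε-tree of `A` with regard to `E`
such that every leaf `L` has a transition `L →^ℓ L'` with `L' ∈ C`. -/
def LTrans (E : Proc Chan → Proc Chan → Prop) (A : Proc Chan) (l : Lab Chan)
    (C : Set (Proc Chan)) : Prop :=
  ∃ t, IsETree E A t ∧ t.Regular ∧
    ∀ σ L p, t.node σ = some (L, p) → ¬ t.hasNode (0 :: σ) →
      ∃ L' ∈ C, Step L.val l L'.val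

/-- The raw term `T` belongs to the set `C` of processes. -/
def inC (C : Set (Proc Chan)) (T : Tm Chan) : Prop := ∃ P ∈ C, P.val = T

/-- `P(L → C)` of a collective silent transition: the sum of the `p_i` whose
target lies in `C`. -/
def collProb (C : Set (Proc Chan)) {n : ℕ} (ps : Fin n → ℝ) (Ts : Fin n → Tm Chan) : ℝ :=
  ∑ i, if inC C (Ts i) then ps i else 0

/-- A `q`-transition `A ⇝_E →^q C`: a regular ε-tree of `A` with regard to `E`
such that every leaf has a collective silent transition whose weighted
probability `P_E(L → C) = P(L → C)/(1 − P(L → [A]_E))` of reaching `C` is `q`. -/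
def QTrans (E : Proc Chan → Proc Chan → Prop) (A : Proc Chan) (q : ℝ)
    (C : Set (Proc Chan)) : Prop :=
  ∃ t, IsETree E A t ∧ t.Regular ∧
    ∀ σ L p, t.node σ = some (L, p) → ¬ t.hasNode (0 :: σ) →
      ∃ (n : ℕ) (ps : Fin n → ℝ) (Ts : Fin n → Tm Chan), CStep L.val n ps Ts ∧
        collProb C ps Ts / (1 - collProb (classOf E A) ps Ts) = q

/-- `E` is a branching bisimulation on `P_RCCS`: an equivalence such that
(1) ℓ-transitions with `ℓ ≠ τ ∨ C ≠ [A]_E` are bisimulated by all members of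
`[A]_E`, and (2) likewise for `q`-transitions with `q ∈ (0,1]` and `C ≠ [A]_E`. -/
def IsBB (E : Proc Chan → Proc Chan → Prop) : Prop :=
  Equivalence E ∧
  (∀ A B l C, l.IsAct → IsClass E C → E A B → (l ≠ Lab.tau 1 ∨ C ≠ classOf E A) →
    LTrans E A l C → LTrans E B l C) ∧
  (∀ A B q C, 0 < q → q ≤ 1 → IsClass E C → E A B → C ≠ classOf E A →
    QTrans E A q C → QTrans E B q C)

/-- `E` is a codivergent branching bisimulation on `P_RCCS`. -/
def IsCBB (E : Proc Chan → Proc Chan → Prop) : Prop := IsBB E ∧ Codivergent E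

/-- `=_RCCS`, the largest codivergent branching bisimulation: the union of all
codivergent branching bisimulations. -/
def RccsEq (A B : Proc Chan) : Prop := ∃ E, IsCBB E ∧ E A B

/-! ### Concrete processes -/

/-- The empty nondeterministic choice `0`. -/
def Tm.nil : Tm Chan := .sum 0 Fin.elim0 Fin.elim0

/-- The prefix `α.T`. -/
def pfx (g : Chan ⊕ Chan) (T : Tm Chan) : Tm Chan := .sum 1 (fun _ => g) (fun _ => T)

/-- The binary choice `α₁.T₁ + α₂.T₂`. -/
def sum2 (g₁ g₂ : Chan ⊕ Chan) (T₁ T₂ : Tm Chan) : Tm Chan := .sum 2 ![g₁, g₂] ![T₁, T₂]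

/-- The binary random choice `pτ.T₁ ⊕ qτ.T₂`. -/
def rand2 (p q : ℝ) (T₁ T₂ : Tm Chan) : Tm Chan := .rand 2 ![p, q] ![T₁, T₂]

/-- `a.0`. -/
def aNil (a : Chan) : Tm Chan := pfx (Sum.inl a) Tm.nil

/-- `c̄.0`. -/
def coNil (c : Chan) : Tm Chan := pfx (Sum.inr c) Tm.nil

/-- `Ω_{½a} = μX.(½τ.a.0 ⊕ ½τ.X)`. -/
def omegaHalfTm (a : Chan) : Tm Chan := .fix (rand2 (1/2) (1/2) (aNil a) (.var 0))

lemma omegaHalf_spec (a : Chan) : (omegaHalfTm a).ClosedAt 0 ∧ (omegaHalfTm a).WF := by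
  refine ⟨?_, ?_⟩ <;>
    simp [omegaHalfTm, rand2, aNil, pfx, Tm.nil, Tm.ClosedAt, Tm.WF, Tm.Guarded,
      Fin.forall_fin_two, Fin.sum_univ_two] <;> norm_num

/-- `Ω_{½a}` as a process. -/
def omegaHalfP (a : Chan) : Proc Chan := ⟨omegaHalfTm a, omegaHalf_spec a⟩

lemma aNil_spec (a : Chan) : (aNil a).ClosedAt 0 ∧ (aNil a).WF := by
  refine ⟨?_, ?_⟩ <;> simp [aNil, pfx, Tm.nil, Tm.ClosedAt, Tm.WF]

/-- `a.0` as a process. -/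
def aNilP (a : Chan) : Proc Chan := ⟨aNil a, aNil_spec a⟩

/-- The open term `C_j` of the probabilistic ring (1-based indices, given
with fuel `m = k - j`): `C_k = ½τ.a_k.0 ⊕ ½τ.X` and
`C_j = ½τ.a_j.0 ⊕ ½τ.C_{j+1}` for `j < k`. -/
def Cterm (a : ℕ → Chan) : ℕ → ℕ → Tm Chan
  | 0, j => rand2 (1/2) (1/2) (aNil (a j)) (.var 0)
  | m + 1, j => rand2 (1/2) (1/2) (aNil (a j)) (Cterm a m (j + 1))

/-- `R = μX.C_1`. -/
def Rterm (a : ℕ → Chan) (k : ℕ) : Tm Chan := .fix (Cterm a (k - 1) 1)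

/-- The ring node `N_j = C_j{R/X}`. -/
def Nterm (a : ℕ → Chan) (k j : ℕ) : Tm Chan := Tm.inst 0 (Rterm a k) (Cterm a (k - j) j)

lemma Cterm_closed (a : ℕ → Chan) : ∀ m j, (Cterm a m j).ClosedAt 1 := by
  intro m
  induction m with
  | zero => intro j; simp [Cterm, rand2, aNil, pfx, Tm.nil, Tm.ClosedAt, Fin.forall_fin_two]
  | succ m ih =>
      intro j
      simp only [Cterm, rand2, Tm.ClosedAt, Fin.forall_fin_two]
      refine ⟨?_, ?_⟩
      · simp [aNil, pfx, Tm.nil, Tm.ClosedAt]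
      · simpa using ih (j + 1)

lemma Cterm_wf (a : ℕ → Chan) : ∀ m j, (Cterm a m j).WF := by
  intro m
  induction m with
  | zero =>
      intro j
      simp [Cterm, rand2, aNil, pfx, Tm.nil, Tm.WF, Fin.forall_fin_two, Fin.sum_univ_two]
      norm_num
  | succ m ih =>
      intro j
      simp only [Cterm, rand2, Tm.WF, Fin.forall_fin_two]
      refine ⟨by norm_num, ?_, ?_, ?_, ?_⟩
      · simp [Fin.forall_fin_two]; norm_num
      · simp [Fin.sum_univ_two]; norm_num
      · simp [aNil, pfx, Tm.nil, Tm.WF]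
      · simpa using ih (j + 1)

lemma Rterm_spec (a : ℕ → Chan) (k : ℕ) : (Rterm a k).ClosedAt 0 ∧ (Rterm a k).WF := by
  refine ⟨?_, ?_, ?_⟩
  · simpa [Rterm, Tm.ClosedAt] using Cterm_closed a (k - 1) 1
  · cases h : (k - 1) <;> simp [Cterm, rand2, Tm.Guarded]
  · exact Cterm_wf a (k - 1) 1

lemma Nterm_aux (a : ℕ → Chan) (k : ℕ) :
    ∀ m j, (Tm.inst 0 (Rterm a k) (Cterm a m j)).ClosedAt 0 ∧
      (Tm.inst 0 (Rterm a k) (Cterm a m j)).WF := by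
  intro m
  induction m with
  | zero =>
      intro j
      constructor
      · simp only [Cterm, rand2, Tm.inst, Tm.ClosedAt, Fin.forall_fin_two]
        refine ⟨?_, ?_⟩
        · simp [aNil, pfx, Tm.nil, Tm.inst, Tm.ClosedAt]
        · simpa [Tm.inst] using (Rterm_spec a k).1
      · simp only [Cterm, rand2, Tm.inst, Tm.WF, Fin.forall_fin_two]
        refine ⟨by norm_num, ?_, ?_, ?_, ?_⟩
        · simp [Fin.forall_fin_two]; norm_num
        · simp [Fin.sum_univ_two]; norm_num
        · simp [aNil, pfx, Tm.nil, Tm.inst, Tm.WF]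
        · simpa [Tm.inst] using (Rterm_spec a k).2
  | succ m ih =>
      intro j
      constructor
      · simp only [Cterm, rand2, Tm.inst, Tm.ClosedAt, Fin.forall_fin_two]
        refine ⟨?_, ?_⟩
        · simp [aNil, pfx, Tm.nil, Tm.inst, Tm.ClosedAt]
        · simpa using (ih (j + 1)).1
      · simp only [Cterm, rand2, Tm.inst, Tm.WF, Fin.forall_fin_two]
        refine ⟨by norm_num, ?_, ?_, ?_, ?_⟩
        · simp [Fin.forall_fin_two]; norm_num
        · simp [Fin.sum_univ_two]; norm_num
        · simp [aNil, pfx, Tm.nil, Tm.inst, Tm.WF]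
        · simpa using (ih (j + 1)).2

lemma Nterm_spec (a : ℕ → Chan) (k j : ℕ) : (Nterm a k j).ClosedAt 0 ∧ (Nterm a k j).WF :=
  Nterm_aux a k (k - j) j

/-- The ring node `N_j` as a process. -/
def NtermP (a : ℕ → Chan) (k j : ℕ) : Proc Chan := ⟨Nterm a k j, Nterm_spec a k j⟩


def RNode (c : Chan) (T S : Tm Chan) : Prop :=
  T = rand2 (1/2) (1/2) (aNil c) S ∨
    ∃ U, T = .fix U ∧ Tm.inst 0 (.fix U) U = rand2 (1/2) (1/2) (aNil c) S

lemma RNode.step {c : Chan} {T S : Tm Chan} (h : RNode c T S) {l T'} (hs : Step T l T') :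
    l = Lab.tau (1/2) := by
  have key : ∀ l T', Step (rand2 (1/2) (1/2) (aNil c) S) l T' → l = Lab.tau (1/2) := by
    intro l T' h
    unfold rand2 at h
    cases h with
    | rand i => fin_cases i <;> simp
  rcases h with h | ⟨U, h, h2⟩
  · subst h; exact key _ _ hs
  · subst h
    cases hs with
    | fix hs => rw [h2] at hs; exact key _ _ hs

lemma RNode.cstep {c : Chan} {T S : Tm Chan} (h : RNode c T S) {n ps Ts} (hs : CStep T n ps Ts) :
    (⟨n, ps, Ts⟩ : Σ n : ℕ, (Fin n → ℝ) × (Fin n → Tm Chan)) =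
      ⟨2, ![1/2, 1/2], ![aNil c, S]⟩ := by
  have key : ∀ n ps Ts, CStep (rand2 (1/2) (1/2) (aNil c) S) n ps Ts →
    (⟨n, ps, Ts⟩ : Σ n : ℕ, (Fin n → ℝ) × (Fin n → Tm Chan)) =
      ⟨2, ![1/2, 1/2], ![aNil c, S]⟩ := by
    intro n ps Ts h
    unfold rand2 at h
    cases h with
    | rand => rfl
  rcases h with h | ⟨U, h, h2⟩
  · subst h; exact key _ _ _ hs
  · subst h
    cases hs with
    | fix hs => rw [h2] at hs; exact key _ _ _ hs

lemma RNode.has {c : Chan} {T S : Tm Chan} (h : RNode c T S) :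
    CStep T 2 ![1/2, 1/2] ![aNil c, S] := by
  rcases h with h | ⟨U, h, h2⟩
  · subst h; exact CStep.rand
  · subst h; apply CStep.fix; rw [h2]; exact CStep.rand

def trivTree (A : Proc Chan) : PTree Chan := ⟨fun σ => if σ = [] then some (A, 1) else none⟩

lemma trivTree_node (A : Proc Chan) (σ B) : (trivTree A).node σ = some B ↔ σ = [] ∧ B = (A, 1) := by
  unfold trivTree
  by_cases h : σ = [] <;> simp [h, eq_comm]

lemma trivTree_has (A : Proc Chan) (σ) : (trivTree A).hasNode σ ↔ σ = [] := by
  unfold trivTree PTree.hasNode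
  by_cases h : σ = [] <;> simp [h]

lemma trivTree_etree {E : Proc Chan → Proc Chan → Prop} (hE : Equivalence E) (A : Proc Chan) :
    IsETree E A (trivTree A) := by
  refine ⟨⟨?_, ?_, ?_, ?_, ?_⟩, ?_, ?_, ?_⟩ <;> simp [trivTree_node, trivTree_has]
  rintro σ B p - rfl -; exact hE.refl _

lemma trivTree_regular (A : Proc Chan) : (trivTree A).Regular := by
  have : (trivTree A).finBranchProb = fun _ => 1 := by
    funext k
    unfold PTree.finBranchProb
    rw [tsum_eq_single []]
    · simp [PTree.IsLeaf, trivTree_has, PTree.pathProb]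
    · intro σ h
      simp [PTree.IsLeaf, trivTree_has, h]
  unfold PTree.Regular
  rw [this]
  exact tendsto_const_nhds

lemma etree_cases {E : Proc Chan → Proc Chan → Prop} {A S : Proc Chan} {c : Chan}
    (hn : RNode c A.val S.val) {t : PTree Chan} (ht : IsETree E A t) :
    ¬ t.hasNode [0] ∨ (E A (aNilP c) ∧ E A S) := by
  by_cases h0 : t.hasNode [0]
  · right
    obtain ⟨⟨h1, _, _, _, h2⟩, h3, h4, _⟩ := ht
    obtain ⟨⟨B, q⟩, hB⟩ := Option.isSome_iff_exists.mp h0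
    obtain ⟨_, _, hs⟩ := h2 [] 0 _ _ _ _ h1 hB
    have hq := hn.step hs
    have hq : q = 1/2 := by simpa using hq
    obtain ⟨n, ps, Ts, hc, _, hch⟩ := h4 [] 0 _ _ _ _ h1 hB (by rw [hq]; norm_num)
    have := hn.cstep hc
    cases this
    obtain ⟨C0, e0, m0⟩ := hch 0
    obtain ⟨C1, e1, m1⟩ := hch 1
    have e0 : C0 = aNilP c := Subtype.ext e0
    have e1 : C1 = S := Subtype.ext e1
    subst e0 e1
    exact ⟨h3 _ _ _ m0, h3 _ _ _ m1⟩
  · exact Or.inl h0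

lemma aNil_step {c : Chan} {l T'} (h : Step (aNil c) l T') : l = Lab.name c := by
  unfold aNil pfx at h
  cases h with
  | sum i => rfl

lemma nil_spec : (Tm.nil : Tm Chan).ClosedAt 0 ∧ (Tm.nil : Tm Chan).WF := by
  simp [Tm.nil, Tm.ClosedAt, Tm.WF]

lemma aNil_ltrans {E : Proc Chan → Proc Chan → Prop} (hE : Equivalence E) (c : Chan) :
    LTrans E (aNilP c) (.name c) (classOf E ⟨Tm.nil, nil_spec⟩) := by
  refine ⟨trivTree _, trivTree_etree hE _, trivTree_regular _, ?_⟩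
  intro σ L p h _
  rw [trivTree_node] at h
  obtain ⟨rfl, h⟩ := h
  cases h
  refine ⟨⟨Tm.nil, nil_spec⟩, hE.refl _, ?_⟩
  exact Step.sum (α := fun _ => Sum.inl c) (T := fun _ => Tm.nil) (0 : Fin 1)

lemma bb_ltrans {E : Proc Chan → Proc Chan → Prop} (hE : IsBB E) {c : Chan} {B : Proc Chan}
    (h : E (aNilP c) B) :
    LTrans E B (.name c) (classOf E ⟨Tm.nil, nil_spec⟩) :=
  hE.2.1 _ _ _ _ trivial ⟨_, rfl⟩ h (Or.inl (by simp)) (aNil_ltrans hE.1 c)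

lemma aNil_inj {E : Proc Chan → Proc Chan → Prop} (hE : IsBB E) {c d : Chan}
    (h : E (aNilP c) (aNilP d)) : c = d := by
  obtain ⟨t, ht, _, hl⟩ := bb_ltrans hE h
  obtain ⟨⟨h1, _, _, _, h2⟩, _⟩ := ht
  by_cases h0 : t.hasNode [0]
  · obtain ⟨⟨B, q⟩, hB⟩ := Option.isSome_iff_exists.mp h0
    obtain ⟨_, _, hs⟩ := h2 [] 0 _ _ _ _ h1 hB
    have := aNil_step hs
    simp at this
  · obtain ⟨L', _, hs⟩ := hl [] _ _ h1 h0
    have := aNil_step hs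
    simpa using this

lemma aNil_node {E : Proc Chan → Proc Chan → Prop} (hE : IsBB E) {c d : Chan} {A S : Proc Chan}
    (hn : RNode d A.val S.val) (h : E (aNilP c) A) : c = d ∧ E (aNilP c) S := by
  obtain ⟨t, ht, _, hl⟩ := bb_ltrans hE h
  rcases etree_cases hn ht with h0 | ⟨h2, h3⟩
  · obtain ⟨L', _, hs⟩ := hl [] _ _ ht.1.1 h0
    have := hn.step hs
    simp at this
  · exact ⟨aNil_inj hE (hE.1.trans h h2), hE.1.trans h h3⟩

def IsRing (a : ℕ → Chan) (k l : ℕ) (P : Proc Chan) : Prop :=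
  1 ≤ l ∧ l ≤ k ∧ (P.val = Nterm a k l ∨ (l = 1 ∧ P.val = Rterm a k))

lemma inst_rand2 (R A B : Tm Chan) (p q : ℝ) :
    Tm.inst 0 R (rand2 p q A B) = rand2 p q (Tm.inst 0 R A) (Tm.inst 0 R B) := by
  simp only [rand2, Tm.inst]
  congr 1
  funext i
  fin_cases i <;> rfl

lemma inst_aNil (R : Tm Chan) (c : Chan) : Tm.inst 0 R (aNil c) = aNil c := by
  simp only [aNil, pfx, Tm.inst, Tm.nil]
  congr 1
  funext i
  congr 1
  funext i
  exact i.elim0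

lemma ring_succ {a : ℕ → Chan} {k l : ℕ} (hk : 2 ≤ k) {P : Proc Chan} (h : IsRing a k l P) :
    ∃ S l', l' ≠ l ∧ IsRing a k l' S ∧ RNode (a l) P.val S.val := by
  obtain ⟨h1, h2, h⟩ := h
  have key : ∃ S l', l' ≠ l ∧ IsRing a k l' S ∧
      Nterm a k l = rand2 (1/2) (1/2) (aNil (a l)) S.val := by
    rcases Nat.lt_or_ge l k with hlt | hge
    · refine ⟨NtermP a k (l+1), l+1, by omega, ⟨by omega, by omega, Or.inl rfl⟩, ?_⟩
      show _ = rand2 _ _ _ (Nterm a k (l+1))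
      unfold Nterm
      obtain ⟨m, hm⟩ : ∃ m, k - l = m + 1 := ⟨k - l - 1, by omega⟩
      have hm' : k - (l+1) = m := by omega
      rw [hm, hm', Cterm, inst_rand2, inst_aNil]
    · have : l = k := by omega
      subst this
      refine ⟨⟨Rterm a l, Rterm_spec a l⟩, 1, by omega, ⟨by omega, by omega, Or.inr ⟨rfl, rfl⟩⟩, ?_⟩
      unfold Nterm
      rw [Nat.sub_self, Cterm, inst_rand2, inst_aNil]
      simp [Tm.inst]
  obtain ⟨S, l', hne, hr, he⟩ := key
  refine ⟨S, l', hne, hr, ?_⟩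
  rcases h with h | ⟨rfl, h⟩
  · exact Or.inl (h.trans he)
  · exact Or.inr ⟨_, h, he⟩

lemma aNil_ring {E : Proc Chan → Proc Chan → Prop} (hE : IsBB E) {a : ℕ → Chan} {k l m : ℕ}
    (hk : 2 ≤ k)
    (hdist : ∀ i j, 1 ≤ i → i ≤ k → 1 ≤ j → j ≤ k → a i = a j → i = j)
    (hm1 : 1 ≤ m) (hmk : m ≤ k) {P : Proc Chan} (h : IsRing a k l P) :
    ¬ E (aNilP (a m)) P := by
  intro hEq
  obtain ⟨S, l', hne, hr, hn⟩ := ring_succ hk h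
  obtain ⟨e, hS⟩ := aNil_node hE hn hEq
  obtain ⟨S', l'', _, _, hn'⟩ := ring_succ hk hr
  obtain ⟨e', _⟩ := aNil_node hE hn' hS
  have := hdist _ _ hm1 hmk h.1 h.2.1 e
  have := hdist _ _ hm1 hmk hr.1 hr.2.1 e'
  omega

lemma inC_val (C : Set (Proc Chan)) (P : Proc Chan) : inC C P.val ↔ P ∈ C :=
  ⟨fun ⟨Q, hQ, e⟩ => (Subtype.ext e : Q = P) ▸ hQ, fun h => ⟨P, h, rfl⟩⟩

lemma collProb_two (C : Set (Proc Chan)) (c : Chan) (S : Proc Chan) :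
    collProb C ![1/2, 1/2] ![aNil c, S.val] =
      (if aNilP c ∈ C then 1/2 else 0) + (if S ∈ C then 1/2 else 0) := by
  have h1 := inC_val C (aNilP c)
  have h2 := inC_val C S
  unfold collProb
  rw [Fin.sum_univ_two]
  simp only [Matrix.cons_val_zero, Matrix.cons_val_one]
  change inC C (aNil c) ↔ _ at h1
  simp only [h1, h2]

/-- For `k ≥ 2` and pairwise distinct channels
`a_1, …, a_k`, no branching bisimulation on `P_RCCS` relates two distinct
nodes `N_i = C_i{R/X}` and `N_j = C_j{R/X}` of the probabilistic ring
`R = μX.C_1`, where `C_k = ½τ.a_k.0 ⊕ ½τ.X` and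
`C_j = ½τ.a_j.0 ⊕ ½τ.C_{j+1}` for `1 ≤ j < k`. -/
theorem ring_nodes_not_bisimilar {Chan : Type} (k : ℕ) (hk : 2 ≤ k) (a : ℕ → Chan)
    (hdist : ∀ i j, 1 ≤ i → i ≤ k → 1 ≤ j → j ≤ k → a i = a j → i = j)
    (i j : ℕ) (hi1 : 1 ≤ i) (hik : i ≤ k) (hj1 : 1 ≤ j) (hjk : j ≤ k) (hij : i ≠ j)
    (E : Proc Chan → Proc Chan → Prop) (hE : IsBB E) :
    ¬ E (NtermP a k i) (NtermP a k j) := by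
  intro hEq
  have ri : IsRing a k i (NtermP a k i) := ⟨hi1, hik, Or.inl rfl⟩
  have rj : IsRing a k j (NtermP a k j) := ⟨hj1, hjk, Or.inl rfl⟩
  generalize NtermP a k i = A at hEq ri
  generalize NtermP a k j = B at hEq rj
  obtain ⟨S, i', _, hS, hnA⟩ := ring_succ hk ri
  obtain ⟨S', j', _, hS', hnB⟩ := ring_succ hk rj
  have no : ∀ {l m P}, 1 ≤ m → m ≤ k → IsRing a k l P → ¬ E (aNilP (a m)) P :=
    fun h1 h2 h3 => aNil_ring hE hk hdist h1 h2 h3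
  have hq : ∃ q : ℝ, 0 < q ∧ q ≤ 1 ∧ QTrans E A q (classOf E (aNilP (a i))) := by
    refine ⟨(1/2) / (1 - (if E A S then 1/2 else 0)), ?_, ?_, ?_⟩
    · split_ifs <;> norm_num
    · split_ifs <;> norm_num
    · refine ⟨trivTree A, trivTree_etree hE.1 _, trivTree_regular _, ?_⟩
      intro σ L p h _
      rw [trivTree_node] at h
      obtain ⟨rfl, h⟩ := h
      cases h
      refine ⟨2, _, _, hnA.has, ?_⟩
      rw [collProb_two, collProb_two]
      simp only [classOf, Set.mem_setOf_eq]
      rw [if_pos (hE.1.refl _), if_neg (no hi1 hik hS),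
        if_neg (fun h => no hi1 hik ri (hE.1.symm h))]
      simp
  obtain ⟨q, hq0, hq1, hqt⟩ := hq
  have hne : classOf E (aNilP (a i)) ≠ classOf E A := by
    intro h
    have : A ∈ classOf E (aNilP (a i)) := by rw [h]; exact hE.1.refl A
    exact no hi1 hik ri this
  obtain ⟨t, ht, _, hl⟩ := hE.2.2 _ _ q _ hq0 hq1 ⟨_, rfl⟩ hEq hne hqt
  rcases etree_cases hnB ht with h0 | ⟨h2, _⟩
  · obtain ⟨n, ps, Ts, hc, he⟩ := hl [] _ _ ht.1.1 h0
    have := hnB.cstep hc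
    cases this
    rw [collProb_two] at he
    simp only [classOf, Set.mem_setOf_eq] at he
    rw [if_neg (no hi1 hik hS'),
      if_neg (fun h => hij (hdist _ _ hi1 hik hj1 hjk (aNil_inj hE h)))] at he
    simp at he
    linarith
  · exact no hj1 hjk rj (hE.1.symm h2)
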